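/- (Kempe's theorem, unit weight case.) Let k be a field of characteristic 0 and let n be even. For every integer m ≥ 1, every element of R_{(m,m,…,m)} is a k-linear combination of products f_1·f_2⋯f_m with each factor f_j ∈ R_{(1,1,…,1)}. In other words, the graded ring of SL₂(k)-invariants ⊕_{m≥0} R_{(m,…,m)} is generated in degree 1. -/

import Mathlib

/-!
An invariant is killed by the polarization operators `D₀₁ = ∑ xᵢ ∂/∂yᵢ` and `D₁₀ = ∑ yᵢ ∂/∂xᵢ`, the
derivatives of the transvections, hence by their commutator `D₀₀ - D₁₁`: it has the same degree `N`
in the `x`'s as in the `y`'s. For such `f`, Capelli's identity reads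
`∑_{i,j} [ij] Ω_{ij} f = 2N(N+1) f` with Cayley's operators `Ω_{ij} = ∂²/∂xᵢ∂yⱼ - ∂²/∂xⱼ∂yᵢ`. As
`Ω_{ij}` commutes with `D₀₁` and lowers `N` by one, induction on `N` shows that the invariants are
generated by the brackets, so `R_v` is spanned by the monomials of the graphs of valence `v`.

Let `Γ` be an `m`-regular graph on an even number of vertices and `S` one half of the vertices.
Counting edge ends, `Γ` has as many edges inside `S` as inside its complement. The Plücker relation
trades one edge of each kind for two edges between `S` and its complement, so one may assume that
`Γ` is bipartite. A regular bipartite graph is a sum of `m` perfect matchings by Hall's theorem, and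
the monomial of a perfect matching lies in `R_{(1,…,1)}`.
-/

open MvPolynomial

/-- The polynomial ring `A = k[x_1, y_1, …, x_n, y_n]`: variable `(i, 0)` is `x_i`
and `(i, 1)` is `y_i`. -/
abbrev PtRing (k : Type) [CommRing k] (n : ℕ) := MvPolynomial (Fin n × Fin 2) k

/-- The bracket `[ab] = x_a y_b − x_b y_a`. -/
noncomputable def bracket (k : Type) [CommRing k] (n : ℕ) (a b : Fin n) : PtRing k n :=
  X (a, 0) * X (b, 1) - X (b, 0) * X (a, 1)

/-- The graph monomial `m_Γ = ∏_{(a,b) ∈ Γ} [ab]` of a directed graph `Γ`,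
viewed as a multiset of directed edges. -/
noncomputable def graphMonomial (k : Type) [CommRing k] (n : ℕ)
    (Γ : Multiset (Fin n × Fin n)) : PtRing k n :=
  (Γ.map fun e => bracket k n e.1 e.2).prod

/-- The `k`-algebra endomorphism of `A` induced by a `2×2` matrix `g = ((p,q),(r,s))`:
`x_i ↦ p·x_i + r·y_i` and `y_i ↦ q·x_i + s·y_i`. -/
noncomputable def subst (k : Type) [CommRing k] (n : ℕ) (g : Matrix (Fin 2) (Fin 2) k) :
    PtRing k n →ₐ[k] PtRing k n :=
  aeval fun p =>
    if p.2 = 0 then C (g 0 0) * X (p.1, 0) + C (g 1 0) * X (p.1, 1)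
    else C (g 0 1) * X (p.1, 0) + C (g 1 1) * X (p.1, 1)

/-- The valence vector of a directed graph: the `i`-th entry is the number of edges
(with multiplicity) having `i` as an endpoint. -/
def valence (n : ℕ) (Γ : Multiset (Fin n × Fin n)) : Fin n → ℕ :=
  fun i => (Γ.map Prod.fst).count i + (Γ.map Prod.snd).count i

/-- `R_v`: the space of `SL₂(k)`-invariant multihomogeneous polynomials of multidegree `v`. -/
noncomputable def Rv (k : Type) [CommRing k] (n : ℕ) (v : Fin n → ℕ) :
    Submodule k (PtRing k n) :=
  (⨅ g : Matrix.SpecialLinearGroup (Fin 2) k,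
      LinearMap.ker ((subst k n (g : Matrix (Fin 2) (Fin 2) k)).toLinearMap
        - (LinearMap.id : PtRing k n →ₗ[k] PtRing k n))) ⊓
  weightedHomogeneousSubmodule k (fun p : Fin n × Fin 2 => Finsupp.single p.1 1)
    (Finsupp.equivFunOnFinite.symm v)

section Polarization

variable {ι κ R : Type*}

lemma pderiv_comm [CommSemiring R] (i j : ι) (f : MvPolynomial ι R) :
    pderiv i (pderiv j f) = pderiv j (pderiv i f) := by
  classical
  obtain rfl | hij := eq_or_ne i j
  · rfl
  ext d
  simp only [coeff_pderiv, Finsupp.add_apply, Finsupp.single_eq_of_ne hij,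
    Finsupp.single_eq_of_ne hij.symm, add_zero]
  rw [add_right_comm, mul_right_comm]

variable [Fintype ι]

/-- The polarization operator `D_{ab} = ∑_i x_{ia} ∂/∂x_{ib}`. The `D_{ab}` are the infinitesimal
generators of the linear substitutions acting on the second index of the variables. -/
noncomputable def polarization [CommSemiring R] (a b : κ) :
    Derivation R (MvPolynomial (ι × κ) R) (MvPolynomial (ι × κ) R) :=
  ∑ i, (X (i, a) : MvPolynomial (ι × κ) R) • pderiv (i, b)

section CommSemiring

variable [CommSemiring R]

lemma polarization_apply (a b : κ) (f : MvPolynomial (ι × κ) R) :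
    polarization a b f = ∑ i, X (i, a) * pderiv (i, b) f := by
  rw [polarization, ← Derivation.coeFnAddMonoidHom_apply, map_sum, Finset.sum_apply]
  rfl

lemma coeff_polarization_self (c : κ) (f : MvPolynomial (ι × κ) R) (d : ι × κ →₀ ℕ) :
    coeff d (polarization c c f) = (∑ i, d (i, c) : ℕ) * coeff d f := by
  induction f using MvPolynomial.induction_on' with
  | monomial e r =>
    classical
    simp only [polarization_apply, X_mul_pderiv_monomial, ← Finset.sum_smul, coeff_smul,
      coeff_monomial]
    split_ifs with h <;> simp [h]
  | add p q hp hq => rw [map_add, coeff_add, coeff_add, hp, hq, mul_add]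

variable [DecidableEq κ]

lemma polarization_X (a b : κ) (p : ι × κ) :
    polarization a b (X p : MvPolynomial (ι × κ) R) = if p.2 = b then X (p.1, a) else 0 := by
  classical
  simp [polarization_apply, pderiv_X, Pi.single_apply, Prod.ext_iff, ite_and]

lemma pderiv_polarization (i : ι) (a b c : κ) (f : MvPolynomial (ι × κ) R) :
    pderiv (i, c) (polarization a b f) =
      polarization a b (pderiv (i, c) f) + if a = c then pderiv (i, b) f else 0 := by
  classical
  simp only [polarization_apply, map_sum, Derivation.leibniz, smul_eq_mul,
    Finset.sum_add_distrib, pderiv_comm (i, c)]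
  simp [pderiv_X, Pi.single_apply, Prod.ext_iff, ite_and]

lemma polarization_polarization (a b c d : κ) (f : MvPolynomial (ι × κ) R) :
    polarization a b (polarization c d f) =
      ∑ i, ∑ j, X (i, a) * X (j, c) * pderiv (i, b) (pderiv (j, d) f) +
        if c = b then polarization a d f else 0 := by
  rw [polarization_apply a b]
  simp only [pderiv_polarization, mul_add, Finset.sum_add_distrib]
  congr 1
  · simp only [polarization_apply, Finset.mul_sum, mul_assoc, pderiv_comm (_, d)]
  · split_ifs <;> simp [polarization_apply]

lemma polarization_commutator (a b c d : κ) (f : MvPolynomial (ι × κ) R) :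
    polarization a b (polarization c d f) + (if a = d then polarization c b f else 0) =
      polarization c d (polarization a b f) + if c = b then polarization a d f else 0 := by
  rw [polarization_polarization, polarization_polarization c d a b, Finset.sum_comm,
    add_right_comm]
  simp only [pderiv_comm (_, d), mul_comm (X (_, c))]

/-- The substitution `x_{ib} ↦ x_{ib} + T x_{ia}`, with an indeterminate parameter `T`; its linear
term in `T` is `D_{ab}`. -/
noncomputable def shear (a b : κ) :
    MvPolynomial (ι × κ) R →ₐ[R] Polynomial (MvPolynomial (ι × κ) R) :=
  aeval fun p =>
    Polynomial.C (X p) + if p.2 = b then Polynomial.X * Polynomial.C (X (p.1, a)) else 0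

omit [Fintype ι] in
lemma coeff_zero_shear (a b : κ) (f : MvPolynomial (ι × κ) R) : (shear a b f).coeff 0 = f := by
  induction f using MvPolynomial.induction_on with
  | C r => simp [shear, Polynomial.algebraMap_apply]
  | add p q hp hq => rw [map_add, Polynomial.coeff_add, hp, hq]
  | mul_X p i hp =>
    rw [map_mul, Polynomial.mul_coeff_zero, hp, shear, aeval_X]
    split_ifs <;> simp

lemma coeff_one_shear (a b : κ) (f : MvPolynomial (ι × κ) R) :
    (shear a b f).coeff 1 = polarization a b f := by
  induction f using MvPolynomial.induction_on with
  | C r => simp [shear, Polynomial.algebraMap_apply]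
  | add p q hp hq => rw [map_add, map_add, Polynomial.coeff_add, hp, hq]
  | mul_X p i hp =>
    have hX : (shear a b (X i : MvPolynomial (ι × κ) R)).coeff 1 = polarization a b (X i) := by
      rw [polarization_X, shear, aeval_X]
      split_ifs <;> simp [Polynomial.coeff_C]
    rw [map_mul, Polynomial.mul_coeff_one, coeff_zero_shear, coeff_zero_shear, hp, hX,
      Derivation.leibniz, smul_eq_mul, smul_eq_mul]
    ring

end CommSemiring

end Polarization

section Capelli

variable {ι R : Type*} [CommRing R]

/-- Cayley's operator `Ω_{ij} = ∂²/∂x_i∂y_j − ∂²/∂x_j∂y_i`, the partner of the bracket `[ij]` in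
Capelli's identity. -/
noncomputable def cayleyOmega (i j : ι) :
    MvPolynomial (ι × Fin 2) R →ₗ[R] MvPolynomial (ι × Fin 2) R :=
  (pderiv (i, 0)).toLinearMap ∘ₗ (pderiv (j, 1)).toLinearMap -
    (pderiv (j, 0)).toLinearMap ∘ₗ (pderiv (i, 1)).toLinearMap

lemma cayleyOmega_apply (i j : ι) (f : MvPolynomial (ι × Fin 2) R) :
    cayleyOmega i j f = pderiv (i, 0) (pderiv (j, 1) f) - pderiv (j, 0) (pderiv (i, 1) f) :=
  rfl

lemma cayleyOmega_polarization [Fintype ι] (i j : ι) (a b : Fin 2)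
    (f : MvPolynomial (ι × Fin 2) R) :
    cayleyOmega i j (polarization a b f) =
      polarization a b (cayleyOmega i j f) + if a = b then cayleyOmega i j f else 0 := by
  simp only [cayleyOmega_apply, pderiv_polarization, map_add, map_sub]
  match a, b with
  | 0, 0 | 1, 1 =>
    simp only [zero_ne_one, one_ne_zero, ↓reduceIte, add_zero, map_zero]
    ring
  | 0, 1 =>
    simp only [zero_ne_one, ↓reduceIte, add_zero, map_zero]
    linear_combination pderiv_comm (i, 1) (j, 1) f
  | 1, 0 =>
    simp only [one_ne_zero, ↓reduceIte, add_zero]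
    linear_combination pderiv_comm (i, 0) (j, 0) f

lemma sum_bracket_mul_cayleyOmega {k : Type} [CommRing k] {n : ℕ} (f : PtRing k n) :
    ∑ i, ∑ j, bracket k n i j * cayleyOmega i j f =
      2 * (polarization 0 0 (polarization 1 1 f) + polarization 1 1 f -
        polarization 1 0 (polarization 0 1 f)) := by
  set T : Fin n → Fin n → PtRing k n := fun i j =>
    bracket k n i j * pderiv (i, 0) (pderiv (j, 1) f) with hT
  have hsum : ∑ i, ∑ j, T i j = polarization 0 0 (polarization 1 1 f) + polarization 1 1 f -
      polarization 1 0 (polarization 0 1 f) := by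
    simp only [hT, bracket, polarization_polarization, sub_mul, Finset.sum_sub_distrib]
    simp [mul_comm (X (_, 1) : PtRing k n)]
  calc ∑ i, ∑ j, bracket k n i j * cayleyOmega i j f
      = ∑ i, ∑ j, (T i j + T j i) := by
        refine Finset.sum_congr rfl fun i _ => Finset.sum_congr rfl fun j _ => ?_
        simp only [hT, cayleyOmega_apply, bracket]
        ring
    _ = ∑ i, ∑ j, T i j + ∑ i, ∑ j, T i j := by
        simp only [Finset.sum_add_distrib]
        rw [Finset.sum_comm (f := fun i j => T j i)]
    _ = _ := by rw [hsum, two_mul]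

variable {k : Type} [Field k] [CharZero k] {n : ℕ}

lemma eq_C_of_polarization_self_eq_zero {f : PtRing k n} (h : ∀ c, polarization c c f = 0) :
    f = C (coeff 0 f) := by
  ext d
  rw [coeff_C]
  split_ifs with hd
  · rw [hd]
  · by_contra hfd
    refine hd (Finsupp.ext fun ⟨i, c⟩ => ?_)
    have hsum := coeff_polarization_self c f d
    rw [h, coeff_zero, eq_comm, mul_eq_zero_iff_right hfd, Nat.cast_eq_zero,
      Finset.sum_eq_zero_iff] at hsum
    exact (hsum i (Finset.mem_univ i)).symm

/-- Capelli's identity writes `f` as a combination of the `[ij] Ω_{ij} f`, and each `Ω_{ij} f`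
satisfies the hypotheses with `N` lowered by one. -/
lemma mem_adjoin_bracket_of_polarization {f : PtRing k n} {N : ℕ}
    (hdeg : ∀ c, polarization c c f = N • f) (hf : polarization 0 1 f = 0) :
    f ∈ Algebra.adjoin k (Set.range (Function.uncurry (bracket k n))) := by
  induction N generalizing f with
  | zero =>
    rw [eq_C_of_polarization_self_eq_zero fun c => (hdeg c).trans (zero_nsmul f)]
    exact Subalgebra.algebraMap_mem _ _
  | succ N ih =>
    have hΩ (i j : Fin n) : cayleyOmega i j f ∈
        Algebra.adjoin k (Set.range (Function.uncurry (bracket k n))) := by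
      refine ih (fun c => ?_) ?_
      · have h := cayleyOmega_polarization i j c c f
        rw [hdeg, map_nsmul, succ_nsmul, if_pos rfl] at h
        exact (add_right_cancel h).symm
      · simpa [hf] using (cayleyOmega_polarization i j 0 1 f).symm
    have hne : (2 * ((N + 1) * (N + 2)) : k) ≠ 0 := by
      exact_mod_cast (by positivity : 2 * ((N + 1) * (N + 2)) ≠ 0)
    have hcapelli : (2 * ((N + 1) * (N + 2)) : k) • f =
        ∑ i, ∑ j, bracket k n i j * cayleyOmega i j f := by
      rw [sum_bracket_mul_cayleyOmega, hdeg 1, map_nsmul, hdeg 0, hf, map_zero, sub_zero,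
        smul_eq_C_mul, nsmul_eq_mul, nsmul_eq_mul]
      simp only [map_mul, map_add, map_natCast, map_ofNat, map_one, Nat.cast_add, Nat.cast_one]
      ring
    rw [← inv_smul_smul₀ hne f, hcapelli]
    exact Subalgebra.smul_mem _ (Subalgebra.sum_mem _ fun i _ => Subalgebra.sum_mem _ fun j _ =>
      Subalgebra.mul_mem _ (Algebra.subset_adjoin (Set.mem_range_self (i, j))) (hΩ i j)) _

end Capelli

section Invariants

variable {k : Type} [CommRing k] {n : ℕ} {v w : Fin n → ℕ} {f g : PtRing k n}

lemma mem_Rv_iff : f ∈ Rv k n v ↔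
    (∀ g : Matrix.SpecialLinearGroup (Fin 2) k, subst k n g f = f) ∧
    f.IsWeightedHomogeneous (fun p : Fin n × Fin 2 => Finsupp.single p.1 1)
      (Finsupp.equivFunOnFinite.symm v) := by
  simp [Rv, sub_eq_zero, mem_weightedHomogeneousSubmodule]

lemma one_mem_Rv : (1 : PtRing k n) ∈ Rv k n 0 :=
  mem_Rv_iff.mpr ⟨fun _ => map_one _, by
    rw [show Finsupp.equivFunOnFinite.symm (0 : Fin n → ℕ) = 0 from Finsupp.ext fun _ => rfl]
    exact isWeightedHomogeneous_one k _⟩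

lemma mul_mem_Rv (hf : f ∈ Rv k n v) (hg : g ∈ Rv k n w) : f * g ∈ Rv k n (v + w) := by
  rw [mem_Rv_iff] at hf hg ⊢
  refine ⟨fun A => by rw [map_mul, hf.1, hg.1], ?_⟩
  rw [show Finsupp.equivFunOnFinite.symm (v + w) =
    Finsupp.equivFunOnFinite.symm v + Finsupp.equivFunOnFinite.symm w from Finsupp.ext fun _ => rfl]
  exact hf.2.mul hg.2

lemma subst_X (A : Matrix (Fin 2) (Fin 2) k) (p : Fin n × Fin 2) :
    subst k n A (X p) = C (A 0 p.2) * X (p.1, 0) + C (A 1 p.2) * X (p.1, 1) := by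
  rw [subst, aeval_X]
  split_ifs with h
  · rw [h]
  · rw [Fin.eq_one_of_ne_zero p.2 h]

lemma subst_bracket (A : Matrix (Fin 2) (Fin 2) k) (a b : Fin n) :
    subst k n A (bracket k n a b) = C A.det * bracket k n a b := by
  simp only [bracket, map_sub, map_mul, subst_X, Matrix.det_fin_two]
  ring

lemma bracket_mem_Rv (a b : Fin n) :
    bracket k n a b ∈ Rv k n (Pi.single a 1 + Pi.single b 1) := by
  have hX (i j : Fin n) : (X (i, 0) * X (j, 1) : PtRing k n).IsWeightedHomogeneous
      (fun p : Fin n × Fin 2 => Finsupp.single p.1 1)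
      (Finsupp.equivFunOnFinite.symm (Pi.single i 1 + Pi.single j 1)) := by
    have hdeg : Finsupp.equivFunOnFinite.symm (Pi.single i 1 + Pi.single j 1) =
        Finsupp.single i 1 + Finsupp.single j 1 := by
      ext l
      simp [Pi.single_apply, Finsupp.single_apply, eq_comm]
    rw [hdeg]
    exact (isWeightedHomogeneous_X k _ (i, 0)).mul (isWeightedHomogeneous_X k _ (j, 1))
  refine mem_Rv_iff.mpr ⟨fun A => by simp [subst_bracket], (hX a b).sub ?_⟩
  rw [add_comm]
  exact hX b a

lemma sum_exponents_of_mem_Rv (hf : f ∈ Rv k n v) {d : Fin n × Fin 2 →₀ ℕ} (hd : coeff d f ≠ 0) :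
    ∑ i, d (i, 0) + ∑ i, d (i, 1) = ∑ i, v i := by
  rw [← Finset.sum_add_distrib]
  refine Finset.sum_congr rfl fun i _ => ?_
  have hdi := DFunLike.congr_fun ((mem_Rv_iff.mp hf).2 hd) i
  simpa [Finsupp.weight_apply, Finsupp.sum_fintype, Fintype.sum_prod_type,
    Finsupp.single_apply, Finset.sum_add_distrib] using hdi

lemma eval_shear {a b : Fin 2} (hab : a ≠ b) (t : k) (f : PtRing k n) :
    (shear a b f).eval (C t) =
      subst k n (Matrix.SpecialLinearGroup.transvection hab t) f := by
  have hcomp : ((Polynomial.aeval (C t : PtRing k n)).restrictScalars k).comp (shear a b) =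
      subst k n (Matrix.SpecialLinearGroup.transvection hab t) := by
    ext p : 1
    simp only [AlgHom.comp_apply, shear, aeval_X, subst_X, AlgHom.restrictScalars_apply,
      Matrix.SpecialLinearGroup.transvection_coe, Matrix.add_apply, Matrix.single_apply]
    match p, a, b with
    | _, 0, 0 | _, 1, 1 => exact absurd rfl hab
    | (i, 0), 0, 1 | (i, 1), 0, 1 | (i, 0), 1, 0 | (i, 1), 1, 0 => simp [add_comm, mul_comm (C t)]
  simpa [Polynomial.aeval_def, Polynomial.eval₂_eq_eval_map] using
    DFunLike.congr_fun hcomp f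

/-- Invariance under the transvections with parameter `t`, for infinitely many `t`, implies
invariance for an indeterminate `t`; compare the linear coefficients. -/
lemma polarization_eq_zero_of_mem_Rv [IsDomain k] [Infinite k] {a b : Fin 2} (hab : a ≠ b)
    (hf : f ∈ Rv k n v) : polarization a b f = 0 := by
  have hshear : shear a b f = Polynomial.C f := by
    refine Polynomial.eq_of_infinite_eval_eq _ _ ?_
    refine (Set.infinite_range_of_injective (C_injective (Fin n × Fin 2) k)).mono ?_
    rintro _ ⟨t, rfl⟩
    rw [Set.mem_ofPred_eq, eval_shear hab, (mem_Rv_iff.mp hf).1, Polynomial.eval_C]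
  rw [← coeff_one_shear, hshear, Polynomial.coeff_C_of_ne_zero one_ne_zero]

/-- If `∑ i, v i` is odd then `f = 0`, so the truncation in the division does no harm. -/
lemma polarization_self_of_mem_Rv [IsDomain k] [CharZero k] (hf : f ∈ Rv k n v) (c : Fin 2) :
    polarization c c f = ((∑ i, v i) / 2) • f := by
  have hcol : polarization 0 0 f = polarization 1 1 f := by
    have h := polarization_commutator 0 1 1 0 f
    simpa [polarization_eq_zero_of_mem_Rv zero_ne_one hf,
      polarization_eq_zero_of_mem_Rv one_ne_zero hf] using h.symm
  ext d
  rw [coeff_polarization_self, coeff_smul, nsmul_eq_mul]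
  by_cases hd : coeff d f = 0
  · rw [hd, mul_zero, mul_zero]
  have hsum := sum_exponents_of_mem_Rv hf hd
  have heq : ∑ i, d (i, 0) = ∑ i, d (i, 1) := by
    have h := congrArg (coeff d) hcol
    rw [coeff_polarization_self, coeff_polarization_self] at h
    exact_mod_cast mul_right_cancel₀ hd h
  congr 2
  fin_cases c <;> dsimp only <;> lia

end Invariants

section GraphMonomial

variable {k : Type} {n : ℕ}

section CommRing

variable [CommRing k]

lemma graphMonomial_cons (e : Fin n × Fin n) (Γ : Multiset (Fin n × Fin n)) :
    graphMonomial k n (e ::ₘ Γ) = bracket k n e.1 e.2 * graphMonomial k n Γ := by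
  rw [graphMonomial, Multiset.map_cons, Multiset.prod_cons, graphMonomial]

lemma graphMonomial_sum {ι : Type*} (s : Finset ι) (Γ : ι → Multiset (Fin n × Fin n)) :
    graphMonomial k n (∑ j ∈ s, Γ j) = ∏ j ∈ s, graphMonomial k n (Γ j) := by
  simp only [graphMonomial, ← Multiset.coe_mapAddMonoidHom, map_sum, Multiset.prod_sum]

lemma valence_cons (e : Fin n × Fin n) (Γ : Multiset (Fin n × Fin n)) :
    valence n (e ::ₘ Γ) = Pi.single e.1 1 + Pi.single e.2 1 + valence n Γ := by
  ext i
  simp only [valence, Multiset.map_cons, Multiset.count_cons, Pi.add_apply, Pi.single_apply]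
  ring

lemma graphMonomial_mem_Rv (Γ : Multiset (Fin n × Fin n)) :
    graphMonomial k n Γ ∈ Rv k n (valence n Γ) := by
  induction Γ using Multiset.induction with
  | empty => exact one_mem_Rv
  | cons e Γ ih =>
    rw [graphMonomial_cons, valence_cons]
    exact mul_mem_Rv (bracket_mem_Rv e.1 e.2) ih

lemma mem_span_range_graphMonomial {f : PtRing k n}
    (hf : f ∈ Algebra.adjoin k (Set.range (Function.uncurry (bracket k n)))) :
    f ∈ Submodule.span k (Set.range (graphMonomial k n)) := by
  rw [← Subalgebra.mem_toSubmodule, Algebra.adjoin_eq_span] at hf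
  refine Submodule.span_mono (fun p hp => ?_) hf
  induction hp using Submonoid.closure_induction with
  | mem _ hx =>
    obtain ⟨e, rfl⟩ := hx
    exact ⟨{e}, by simp [graphMonomial, Function.uncurry]⟩
  | one => exact ⟨0, by simp [graphMonomial]⟩
  | mul _ _ _ _ hx hy =>
    obtain ⟨Γ, rfl⟩ := hx
    obtain ⟨Δ, rfl⟩ := hy
    exact ⟨Γ + Δ, by simp [graphMonomial]⟩

lemma weightedHomogeneousComponent_graphMonomial (v : Fin n → ℕ) (Γ : Multiset (Fin n × Fin n)) :
    weightedHomogeneousComponent (fun p : Fin n × Fin 2 => Finsupp.single p.1 1)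
        (Finsupp.equivFunOnFinite.symm v) (graphMonomial k n Γ) =
      if valence n Γ = v then graphMonomial k n Γ else 0 := by
  have hΓ := (mem_Rv_iff.mp (graphMonomial_mem_Rv (k := k) Γ)).2
  split_ifs with h
  · rw [← h]
    exact hΓ.weightedHomogeneousComponent_same
  · exact hΓ.weightedHomogeneousComponent_ne _ fun h' =>
      h (Finsupp.equivFunOnFinite.symm.injective h'.symm)

end CommRing

theorem Rv_eq_span_graphMonomial [Field k] [CharZero k] (v : Fin n → ℕ) :
    Rv k n v = Submodule.span k (graphMonomial k n '' {Γ | valence n Γ = v}) := by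
  refine le_antisymm (fun f hf => ?_) (Submodule.span_le.mpr ?_)
  · have hspan := Submodule.mem_map_of_mem (f := weightedHomogeneousComponent
        (fun p : Fin n × Fin 2 => Finsupp.single p.1 1) (Finsupp.equivFunOnFinite.symm v)) <|
      mem_span_range_graphMonomial <| mem_adjoin_bracket_of_polarization
        (polarization_self_of_mem_Rv hf) (polarization_eq_zero_of_mem_Rv zero_ne_one hf)
    rw [(mem_Rv_iff.mp hf).2.weightedHomogeneousComponent_same, Submodule.map_span,
      ← Set.range_comp] at hspan
    refine Submodule.span_le.mpr ?_ hspan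
    rintro _ ⟨Γ, rfl⟩
    rw [Function.comp_apply, weightedHomogeneousComponent_graphMonomial]
    split_ifs with h
    · exact Submodule.subset_span ⟨Γ, h, rfl⟩
    · exact Submodule.zero_mem _
  · rintro _ ⟨Γ, rfl, rfl⟩
    exact graphMonomial_mem_Rv Γ

end GraphMonomial

section Straightening

variable {k : Type} [CommRing k] {n : ℕ}

lemma bracket_swap (a b : Fin n) : bracket k n b a = -bracket k n a b := by
  simp only [bracket, neg_sub]

lemma bracket_mul_bracket (a b c d : Fin n) :
    bracket k n a b * bracket k n c d =
      bracket k n a c * bracket k n b d - bracket k n a d * bracket k n b c := by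
  simp only [bracket]
  ring

lemma graphMonomial_cons_cons_eq_sub (a b c d : Fin n) (Γ : Multiset (Fin n × Fin n)) :
    graphMonomial k n ((a, b) ::ₘ (c, d) ::ₘ Γ) =
      graphMonomial k n ((a, c) ::ₘ (b, d) ::ₘ Γ) -
        graphMonomial k n ((a, d) ::ₘ (b, c) ::ₘ Γ) := by
  simp only [graphMonomial_cons, ← mul_assoc, bracket_mul_bracket a b, sub_mul]

lemma exists_graphMonomial_eq_or_eq_neg {S : Finset (Fin n)} {Γ : Multiset (Fin n × Fin n)}
    (hΓ : ∀ e ∈ Γ, e.1 ∈ S ↔ e.2 ∉ S) :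
    ∃ Δ, valence n Δ = valence n Γ ∧ (∀ e ∈ Δ, e.1 ∈ S ∧ e.2 ∉ S) ∧
      (graphMonomial k n Γ = graphMonomial k n Δ ∨
        graphMonomial k n Γ = -graphMonomial k n Δ) := by
  induction Γ using Multiset.induction with
  | empty => exact ⟨0, rfl, by simp, .inl rfl⟩
  | cons e Γ ih =>
    rw [Multiset.forall_mem_cons] at hΓ
    obtain ⟨Δ, hval, hcross, hsign⟩ := ih hΓ.2
    by_cases he : e.1 ∈ S
    · refine ⟨e ::ₘ Δ, by rw [valence_cons, valence_cons, hval],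
        Multiset.forall_mem_cons.mpr ⟨⟨he, hΓ.1.mp he⟩, hcross⟩, ?_⟩
      rw [graphMonomial_cons, graphMonomial_cons]
      exact hsign.imp (fun h => by rw [h]) fun h => by rw [h, mul_neg]
    · refine ⟨e.swap ::ₘ Δ, ?_, Multiset.forall_mem_cons.mpr
        ⟨⟨not_not.mp (mt hΓ.1.mpr he), he⟩, hcross⟩, ?_⟩
      · rw [valence_cons, valence_cons, hval, Prod.fst_swap, Prod.snd_swap,
          add_comm (Pi.single e.2 1)]
      · rw [graphMonomial_cons, graphMonomial_cons, Prod.fst_swap, Prod.snd_swap, bracket_swap]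
        exact hsign.symm.imp (fun h => by rw [h]; ring) fun h => by rw [h]; ring

lemma sum_valence_add_two_mul_countP (S : Finset (Fin n)) (Γ : Multiset (Fin n × Fin n)) :
    ∑ i ∈ S, valence n Γ i + 2 * Γ.countP (fun e => e.1 ∉ S ∧ e.2 ∉ S) =
      ∑ i ∈ Sᶜ, valence n Γ i + 2 * Γ.countP (fun e => e.1 ∈ S ∧ e.2 ∈ S) := by
  induction Γ using Multiset.induction with
  | empty => simp [valence]
  | cons e Γ ih =>
    simp only [valence_cons, Pi.add_apply, Finset.sum_add_distrib, Pi.single_apply,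
      Finset.sum_ite_eq', Multiset.countP_cons, Finset.mem_compl]
    by_cases h₁ : e.1 ∈ S <;> by_cases h₂ : e.2 ∈ S <;>
      simp only [h₁, h₂, not_true, not_false_eq_true, and_self, and_true, and_false, ↓reduceIte] <;>
      lia

lemma exists_eq_cons_cons_of_countP_pos {α : Type*} {p q : α → Prop} [DecidablePred p]
    [DecidablePred q] {s : Multiset α} (hpq : ∀ a, p a → ¬q a) (hp : 0 < s.countP p)
    (hq : 0 < s.countP q) : ∃ a b t, p a ∧ q b ∧ s = a ::ₘ b ::ₘ t := by
  obtain ⟨a, ha, hpa⟩ := Multiset.countP_pos.mp hp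
  obtain ⟨t, rfl⟩ := Multiset.exists_cons_of_mem ha
  rw [Multiset.countP_cons_of_neg _ (hpq a hpa)] at hq
  obtain ⟨b, hb, hqb⟩ := Multiset.countP_pos.mp hq
  obtain ⟨t, rfl⟩ := Multiset.exists_cons_of_mem hb
  exact ⟨a, b, t, hpa, hqb, rfl⟩

/-- The Plücker relation trades an edge inside `S` and an edge inside its complement for two edges
between them. -/
lemma graphMonomial_mem_span_of_sum_valence_eq {S : Finset (Fin n)}
    {Γ : Multiset (Fin n × Fin n)}
    (hΓ : ∑ i ∈ S, valence n Γ i = ∑ i ∈ Sᶜ, valence n Γ i) :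
    graphMonomial k n Γ ∈ Submodule.span k (graphMonomial k n ''
      {Δ | valence n Δ = valence n Γ ∧ ∀ e ∈ Δ, e.1 ∈ S ∧ e.2 ∉ S}) := by
  have hbal : Γ.countP (fun e => e.1 ∉ S ∧ e.2 ∉ S) = Γ.countP (fun e => e.1 ∈ S ∧ e.2 ∈ S) := by
    have := sum_valence_add_two_mul_countP S Γ
    lia
  induction hN : Γ.countP (fun e => e.1 ∈ S ∧ e.2 ∈ S) generalizing Γ with
  | zero =>
    have hout := hbal.trans hN
    rw [Multiset.countP_eq_zero] at hN hout
    obtain ⟨Δ, hval, hcross, hsign⟩ := exists_graphMonomial_eq_or_eq_neg (k := k) (S := S)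
      (Γ := Γ) fun e he => by have := hN e he; have := hout e he; tauto
    have hmem := Submodule.subset_span (R := k) (Set.mem_image_of_mem (graphMonomial k n)
      (show Δ ∈ {Δ | valence n Δ = valence n Γ ∧ ∀ e ∈ Δ, e.1 ∈ S ∧ e.2 ∉ S} from ⟨hval, hcross⟩))
    obtain h | h := hsign
    · rwa [h]
    · rw [h]
      exact Submodule.neg_mem _ hmem
  | succ N ih =>
    obtain ⟨⟨a, b⟩, ⟨c, d⟩, Γ, ⟨ha, hb⟩, ⟨hc, hd⟩, rfl⟩ :=
      exists_eq_cons_cons_of_countP_pos (fun e he he' => he'.1 he.1) (N.succ_pos.trans_eq hN.symm)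
        (N.succ_pos.trans_eq (hbal.trans hN).symm)
    have hval₁ : valence n ((a, c) ::ₘ (b, d) ::ₘ Γ) = valence n ((a, b) ::ₘ (c, d) ::ₘ Γ) := by
      simp only [valence_cons]
      abel
    have hval₂ : valence n ((a, d) ::ₘ (b, c) ::ₘ Γ) = valence n ((a, b) ::ₘ (c, d) ::ₘ Γ) := by
      simp only [valence_cons]
      abel
    rw [graphMonomial_cons_cons_eq_sub]
    refine Submodule.sub_mem _ (hval₁ ▸ ih (hval₁ ▸ hΓ) ?_ ?_) (hval₂ ▸ ih (hval₂ ▸ hΓ) ?_ ?_) <;>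
      simp_all

end Straightening

section PerfectMatching

lemma sum_count_map {α γ : Type*} [DecidableEq α] (s : Finset α) (f : γ → α) (Γ : Multiset γ) :
    ∑ a ∈ s, (Γ.map f).count a = Γ.countP (f · ∈ s) := by
  induction Γ using Multiset.induction with
  | empty => simp
  | cons e Γ ih =>
    simp [Multiset.count_cons, Multiset.countP_cons, Finset.sum_add_distrib, ih]

lemma finite_of_forall_mem {γ : Type*} {s : Multiset γ} (hs : ∀ c, c ∈ s) : Finite γ :=
  Set.finite_univ_iff.mp (s.finite_toSet.subset fun c _ => hs c)

variable {α β : Type*} {Γ : Multiset (α × β)} {m : ℕ}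

lemma exists_equiv_forall_mem_of_regular [DecidableEq α] [DecidableEq β] (hm : 0 < m)
    (hfst : ∀ a, (Γ.map Prod.fst).count a = m) (hsnd : ∀ b, (Γ.map Prod.snd).count b = m) :
    ∃ σ : α ≃ β, ∀ a, (a, σ a) ∈ Γ := by
  have : Finite α := finite_of_forall_mem fun a => Multiset.count_pos.mp (hm.trans_eq (hfst a).symm)
  have : Finite β := finite_of_forall_mem fun b => Multiset.count_pos.mp (hm.trans_eq (hsnd b).symm)
  obtain ⟨_⟩ := nonempty_fintype α
  obtain ⟨_⟩ := nonempty_fintype β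
  have hα (s : Finset α) : s.card * m = Γ.countP (·.1 ∈ s) := by
    simp [← sum_count_map, hfst]
  have hβ (s : Finset β) : s.card * m = Γ.countP (·.2 ∈ s) := by
    simp [← sum_count_map, hsnd]
  have hcard : Fintype.card α = Fintype.card β := by
    refine Nat.eq_of_mul_eq_mul_right hm ?_
    rw [← Finset.card_univ, ← Finset.card_univ, hα, hβ]
    simp
  have hall (s : Finset α) :
      s.card ≤ (s.biUnion fun a => Finset.univ.filter fun b => (a, b) ∈ Γ).card := by
    refine Nat.le_of_mul_le_mul_right ?_ hm
    rw [hα, hβ, Multiset.countP_eq_card_filter, Multiset.countP_eq_card_filter]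
    refine Multiset.card_le_card (Multiset.le_filter.mpr ⟨Multiset.filter_le _ _, fun e he => ?_⟩)
    obtain ⟨heΓ, hes⟩ := Multiset.mem_filter.mp he
    exact Finset.mem_biUnion.mpr ⟨e.1, hes, Finset.mem_filter.mpr ⟨Finset.mem_univ _, heΓ⟩⟩
  obtain ⟨σ, hσ, hmem⟩ := (Finset.all_card_le_biUnion_card_iff_exists_injective _).mp hall
  exact ⟨.ofBijective σ ((Fintype.bijective_iff_injective_and_card σ).mpr ⟨hσ, hcard⟩),
    fun a => by simpa using hmem a⟩

variable [Fintype α]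

/-- The edge multiset of the perfect matching of `α` with `β` given by a bijection `σ`, in the
complete bipartite graph on `α` and `β`. -/
def matching (σ : α ≃ β) : Multiset (α × β) :=
  Finset.univ.val.map fun a => (a, σ a)

lemma count_map_fst_matching [DecidableEq α] (σ : α ≃ β) (a : α) :
    ((matching σ).map Prod.fst).count a = 1 := by
  simp [matching]

lemma count_map_snd_matching [DecidableEq β] (σ : α ≃ β) (b : β) :
    ((matching σ).map Prod.snd).count b = 1 := by
  classical
  obtain ⟨a, rfl⟩ := σ.surjective b
  rw [matching, Multiset.map_map, Function.comp_def,
    Multiset.count_map_eq_count' _ _ σ.injective, Multiset.count_univ]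

lemma exists_eq_sum_matching_of_regular [DecidableEq α] [DecidableEq β]
    (hfst : ∀ a, (Γ.map Prod.fst).count a = m) (hsnd : ∀ b, (Γ.map Prod.snd).count b = m) :
    ∃ σ : Fin m → (α ≃ β), Γ = ∑ j, matching (σ j) := by
  induction m generalizing Γ with
  | zero =>
    refine ⟨Fin.elim0, Multiset.eq_zero_of_forall_notMem fun e he => ?_⟩
    exact Multiset.count_eq_zero.mp (hfst e.1) (Multiset.mem_map_of_mem _ he)
  | succ m ih =>
    obtain ⟨σ, hσ⟩ := exists_equiv_forall_mem_of_regular m.succ_pos hfst hsnd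
    have hle : matching σ ≤ Γ := by
      have hnodup : (matching σ).Nodup := .of_map Prod.fst <|
        Multiset.nodup_iff_count_le_one.mpr fun a => (count_map_fst_matching σ a).le
      refine (Multiset.le_iff_subset hnodup).mpr fun e he => ?_
      obtain ⟨a, -, rfl⟩ := Multiset.mem_map.mp he
      exact hσ a
    obtain ⟨Γ', rfl⟩ := Multiset.le_iff_exists_add.mp hle
    simp only [Multiset.map_add, Multiset.count_add, count_map_fst_matching,
      count_map_snd_matching, add_comm 1, Nat.add_right_cancel_iff] at hfst hsnd
    obtain ⟨τ, rfl⟩ := ih hfst hsnd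
    exact ⟨Fin.cons σ τ, by simp [Fin.sum_univ_succ]⟩

end PerfectMatching

section BipartiteGraph

variable {n : ℕ} {S : Finset (Fin n)}

/-- The graph on `Fin n` underlying a bipartite graph between `S` and its complement, each edge
being directed from `S` to the complement. -/
def ofBipartite (Γ : Multiset ({i // i ∈ S} × {i // i ∉ S})) : Multiset (Fin n × Fin n) :=
  Γ.map (Prod.map (↑) (↑))

lemma exists_ofBipartite_eq {Γ : Multiset (Fin n × Fin n)} (hΓ : ∀ e ∈ Γ, e.1 ∈ S ∧ e.2 ∉ S) :
    ∃ Δ : Multiset ({i // i ∈ S} × {i // i ∉ S}), ofBipartite Δ = Γ :=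
  CanLift.prf Γ hΓ

lemma valence_ofBipartite_of_mem (Γ : Multiset ({i // i ∈ S} × {i // i ∉ S})) (a : {i // i ∈ S}) :
    valence n (ofBipartite Γ) a = (Γ.map Prod.fst).count a := by
  have hsnd : ((ofBipartite Γ).map Prod.snd).count ↑a = 0 := by
    rw [Multiset.count_eq_zero]
    simp [ofBipartite]
  rw [valence, hsnd, add_zero, ← Multiset.count_map_eq_count' _ _ Subtype.val_injective,
    ofBipartite, Multiset.map_map, Multiset.map_map]
  rfl

lemma valence_ofBipartite_of_notMem (Γ : Multiset ({i // i ∈ S} × {i // i ∉ S}))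
    (b : {i // i ∉ S}) : valence n (ofBipartite Γ) b = (Γ.map Prod.snd).count b := by
  have hfst : ((ofBipartite Γ).map Prod.fst).count ↑b = 0 := by
    rw [Multiset.count_eq_zero]
    simp [ofBipartite, b.2]
  rw [valence, hfst, zero_add, ← Multiset.count_map_eq_count' _ _ Subtype.val_injective,
    ofBipartite, Multiset.map_map, Multiset.map_map]
  rfl

lemma valence_ofBipartite_matching (σ : {i // i ∈ S} ≃ {i // i ∉ S}) :
    valence n (ofBipartite (matching σ)) = fun _ => 1 := by
  ext i
  by_cases hi : i ∈ S
  · rw [valence_ofBipartite_of_mem _ ⟨i, hi⟩, count_map_fst_matching]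
  · rw [valence_ofBipartite_of_notMem _ ⟨i, hi⟩, count_map_snd_matching]

lemma exists_graphMonomial_eq_prod {k : Type} [CommRing k] {m : ℕ} {Γ : Multiset (Fin n × Fin n)}
    (hcross : ∀ e ∈ Γ, e.1 ∈ S ∧ e.2 ∉ S) (hval : valence n Γ = fun _ => m) :
    ∃ g : Fin m → PtRing k n, (∀ j, g j ∈ Rv k n fun _ => 1) ∧
      graphMonomial k n Γ = ∏ j, g j := by
  obtain ⟨Δ, rfl⟩ := exists_ofBipartite_eq hcross
  obtain ⟨σ, rfl⟩ := exists_eq_sum_matching_of_regular (m := m) (Γ := Δ)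
    (fun a => by rw [← valence_ofBipartite_of_mem, hval])
    (fun b => by rw [← valence_ofBipartite_of_notMem, hval])
  refine ⟨fun j => graphMonomial k n (ofBipartite (matching (σ j))), fun j => ?_, ?_⟩
  · rw [← valence_ofBipartite_matching (σ j)]
    exact graphMonomial_mem_Rv _
  · rw [← graphMonomial_sum]
    simp only [ofBipartite, ← Multiset.coe_mapAddMonoidHom, map_sum]

end BipartiteGraph

/-- Kempe's theorem, unit weight case: for `n` even, every invariant of multidegree
`(m,…,m)` is a linear combination of products of `m` invariants of multidegree `(1,…,1)`. -/
theorem stmt4 (k : Type) [Field k] [CharZero k] (n : ℕ) (hn : Even n)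
    (m : ℕ) (hm : 1 ≤ m) (f : PtRing k n) (hf : f ∈ Rv k n fun _ => m) :
    f ∈ Submodule.span k
      {p : PtRing k n | ∃ g : Fin m → PtRing k n,
        (∀ j, g j ∈ Rv k n fun _ => 1) ∧ p = ∏ j, g j} := by
  obtain ⟨r, rfl⟩ := hn
  obtain ⟨S, -, hS⟩ := Finset.exists_subset_card_eq (s := (Finset.univ : Finset (Fin (r + r))))
    (n := r) (by simp)
  have hhalves : ∑ _ ∈ S, m = ∑ _ ∈ Sᶜ, m := by simp [Finset.card_compl, hS]
  rw [Rv_eq_span_graphMonomial] at hf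
  refine Submodule.span_le.mpr ?_ hf
  rintro _ ⟨Γ, hΓ, rfl⟩
  rw [Set.mem_ofPred_eq] at hΓ
  have hspan := graphMonomial_mem_span_of_sum_valence_eq (k := k) (S := S) (Γ := Γ)
    (by rwa [hΓ])
  refine Submodule.span_mono ?_ hspan
  rintro _ ⟨Δ, ⟨hval, hcross⟩, rfl⟩
  exact exists_graphMonomial_eq_prod hcross (hval.trans hΓ)
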